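/- arXiv:2112.11794 — 2 statements merged into one kernel-verified Lean document; each statement's English description precedes it below -/
import Mathlib

section
/- For every constant 0 < ρ < 1 and all real σ, s with cos σ ≠ cos s: (f_ρ(σ) − f_ρ(s)) / (2(cos s − cos σ)) = (1−ρ²)² / (4·(1 − 2ρ cos σ + ρ²)·(1 − 2ρ cos s + ρ²)). In particular b_{f_ρ}(σ,s) is positive and bounded away from zero, uniformly in σ and s. -/
open MeasureTheory Filter Real Topology

noncomputable section

/-- The `k`-th Fourier coefficient of a (2π-periodic) function `u : ℝ → ℝ`. -/
def fCoeff (u : ℝ → ℝ) (k : ℤ) : ℂ :=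
  (1 / (2 * (π : ℂ))) * ∫ θ in (0:ℝ)..(2*π), (u θ : ℂ) * Complex.exp (-Complex.I * (k : ℂ) * (θ : ℂ))

/-- The `n × n` Toeplitz matrix generated by `u`. -/
def toeplitz (u : ℝ → ℝ) (n : ℕ) : Matrix (Fin n) (Fin n) ℂ :=
  Matrix.of fun i j => fCoeff u ((i : ℤ) - (j : ℤ))

/-- The eigenvalues of a Hermitian matrix, arranged in nondecreasing order. -/
def sortedEigs {n : ℕ} {A : Matrix (Fin n) (Fin n) ℂ} (hA : A.IsHermitian) : Fin n → ℝ :=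
  hA.eigenvalues ∘ Tuple.sort hA.eigenvalues

/-- Cauchy principal value of `∫_0^{2π} u`, where `u` is singular (only) at `s` and `2π - s`. -/
def pvIntegral2 (u : ℝ → ℝ) (s : ℝ) : ℝ :=
  limUnder (𝓝[>] (0:ℝ)) fun ε =>
    ∫ σ in Set.Icc (0:ℝ) (2*π) \ (Set.Ioo (s-ε) (s+ε) ∪ Set.Ioo (2*π-s-ε) (2*π-s+ε)), u σ

/-- The function `b_f(σ,s) = (f(σ) - f(s))/(2(cos s - cos σ))`, extended by continuity to the
points where `cos σ = cos s`. -/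
def bSymb (f : ℝ → ℝ) (σ s : ℝ) : ℝ :=
  if Real.cos σ = Real.cos s then
    limUnder (𝓝[≠] σ) fun τ => (f τ - f s) / (2 * (Real.cos s - Real.cos τ))
  else (f σ - f s) / (2 * (Real.cos s - Real.cos σ))

/-- The function `η_f`. -/
def etaF (f : ℝ → ℝ) (s : ℝ) : ℝ :=
  (Real.sin s / (2*π)) *
    pvIntegral2 (fun σ => Real.log (bSymb f σ s) / (Real.cos s - Real.cos σ)) s

/-- The function `ψ` associated with symbols `f` and `g`. -/
def psiF (f g : ℝ → ℝ) (s : ℝ) : ℝ :=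
  (Real.sin s / (2*π)) *
    pvIntegral2 (fun σ => bSymb g σ s / (bSymb f σ s * (Real.cos s - Real.cos σ))) s

/-- The function `φ` associated with symbols `f` and `g`. -/
def phiF (f g : ℝ → ℝ) (s : ℝ) : ℝ :=
  (Real.sin s / (2*π)) *
    pvIntegral2
      (fun σ => bSymb g σ s / ((bSymb f σ s + bSymb g σ s) * (Real.cos s - Real.cos σ))) s

/-- A symmetric simple-loop symbol of class `SL^α`. -/
structure IsSimpleLoop (α : ℝ) (f : ℝ → ℝ) : Prop where
  periodic : Function.Periodic f (2*π)
  smooth : ContDiff ℝ 2 f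
  wiener : Summable fun k : ℤ => ‖fCoeff f k‖ * ((k.natAbs : ℝ) + 1) ^ α
  symm : ∀ s, f (2*π - s) = f s
  f_zero : f 0 = 0
  deriv_zero : deriv f 0 = 0
  deriv2_zero : 0 < deriv (deriv f) 0
  deriv_pos : ∀ σ ∈ Set.Ioo (0:ℝ) π, 0 < deriv f σ
  deriv_pi : deriv f π = 0
  deriv2_pi : deriv (deriv f) π < 0
  f_pi : 0 < f π

end

/-- The Kac–Murdock–Szegő symbol. -/
noncomputable def kms (ρ : ℝ) : ℝ → ℝ :=
  fun σ => ((1+ρ)^2/2) * ((1 - Real.cos σ)/(1 - 2*ρ*Real.cos σ + ρ^2))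

/-!
As a function of `x = cos σ`, the symbol `kms ρ` is a Möbius transformation `x ↦ k (1 - x) / d x`
with `d x = 1 - 2 ρ x + ρ²`. A difference of two values of a Möbius transformation is its
determinant times the difference of the arguments, divided by the product of the denominators, so
the factor `cos s - cos σ` cancels and leaves an expression that is continuous in `σ` as long as
the denominators do not vanish. Since `1 - 2 ρ cos σ + ρ² = |1 - ρ exp (i σ)|²`, they lie between
`(1 - |ρ|)²` and `(1 + |ρ|)²`.
-/

lemma eventually_nhdsNE_cos_ne (σ c : ℝ) : ∀ᶠ τ in 𝓝[≠] σ, Real.cos τ ≠ c := by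
  refine (Real.analyticAt_cos.eventually_eq_or_eventually_ne analyticAt_const).resolve_left
    fun h => ?_
  have cos_eq_const : Real.cos = fun _ => c :=
    AnalyticOnNhd.eq_of_eventuallyEq (fun _ _ => Real.analyticAt_cos)
      (fun _ _ => analyticAt_const) h
  have cos_zero_eq_cos_pi : Real.cos 0 = Real.cos π := by rw [cos_eq_const]
  norm_num at cos_zero_eq_cos_pi

lemma bSymb_eq_of_continuousAt {f B : ℝ → ℝ} {σ s : ℝ} (hB : ContinuousAt B σ)
    (hfB : ∀ τ, Real.cos τ ≠ Real.cos s → (f τ - f s) / (2 * (Real.cos s - Real.cos τ)) = B τ) :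
    bSymb f σ s = B σ := by
  unfold bSymb
  split_ifs with h
  · refine Tendsto.limUnder_eq ((hB.tendsto.mono_left nhdsWithin_le_nhds).congr' ?_)
    filter_upwards [eventually_nhdsNE_cos_ne σ (Real.cos s)] with τ hτ
    exact (hfB τ hτ).symm
  · exact hfB σ h

section KMS

variable (ρ σ s : ℝ)

lemma abs_mul_cos_le_abs : |ρ * Real.cos σ| ≤ |ρ| := by
  rw [abs_mul]
  exact mul_le_of_le_one_right (abs_nonneg ρ) (Real.abs_cos_le_one σ)

lemma sq_one_sub_abs_le_kms_denom : (1 - |ρ|) ^ 2 ≤ 1 - 2 * ρ * Real.cos σ + ρ ^ 2 := by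
  linarith [le_of_abs_le (abs_mul_cos_le_abs ρ σ), sub_sq 1 |ρ|, sq_abs ρ]

lemma kms_denom_le_sq_one_add_abs : 1 - 2 * ρ * Real.cos σ + ρ ^ 2 ≤ (1 + |ρ|) ^ 2 := by
  linarith [neg_le_of_abs_le (abs_mul_cos_le_abs ρ σ), add_sq 1 |ρ|, sq_abs ρ]

variable {ρ}

lemma kms_denom_pos (hρ : |ρ| ≠ 1) : 0 < 1 - 2 * ρ * Real.cos σ + ρ ^ 2 :=
  (sq_pos_of_ne_zero (sub_ne_zero.2 hρ.symm)).trans_le (sq_one_sub_abs_le_kms_denom ρ σ)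

lemma kms_sub_kms (hρ : |ρ| ≠ 1) :
    kms ρ σ - kms ρ s = (1 - ρ ^ 2) ^ 2 * (Real.cos s - Real.cos σ) /
      (2 * (1 - 2 * ρ * Real.cos σ + ρ ^ 2) * (1 - 2 * ρ * Real.cos s + ρ ^ 2)) := by
  have hσ := (kms_denom_pos σ hρ).ne'
  have hs := (kms_denom_pos s hρ).ne'
  unfold kms
  rw [← mul_sub, div_sub_div _ _ hσ hs, div_mul_div_comm, ← mul_assoc,
    div_left_inj' (by positivity)]
  ring

variable {σ s} in
lemma kms_sub_kms_div (hρ : |ρ| ≠ 1) (h : Real.cos σ ≠ Real.cos s) :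
    (kms ρ σ - kms ρ s) / (2 * (Real.cos s - Real.cos σ)) = (1 - ρ ^ 2) ^ 2 /
      (4 * (1 - 2 * ρ * Real.cos σ + ρ ^ 2) * (1 - 2 * ρ * Real.cos s + ρ ^ 2)) := by
  have hcos : Real.cos s - Real.cos σ ≠ 0 := sub_ne_zero.2 h.symm
  rw [kms_sub_kms σ s hρ, div_div, ← mul_assoc, mul_div_mul_right _ _ hcos]
  ring

lemma bSymb_kms (hρ : |ρ| ≠ 1) :
    bSymb (kms ρ) σ s = (1 - ρ ^ 2) ^ 2 /
      (4 * (1 - 2 * ρ * Real.cos σ + ρ ^ 2) * (1 - 2 * ρ * Real.cos s + ρ ^ 2)) := by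
  have hσ := kms_denom_pos σ hρ
  have hs := kms_denom_pos s hρ
  exact bSymb_eq_of_continuousAt
    (B := fun τ => (1 - ρ ^ 2) ^ 2 /
      (4 * (1 - 2 * ρ * Real.cos τ + ρ ^ 2) * (1 - 2 * ρ * Real.cos s + ρ ^ 2)))
    (ContinuousAt.div (by fun_prop) (by fun_prop) (by positivity))
    fun _ => kms_sub_kms_div hρ

lemma le_bSymb_kms (hρ : |ρ| ≠ 1) :
    ((1 - |ρ|) / (2 * (1 + |ρ|))) ^ 2 ≤ bSymb (kms ρ) σ s := by
  have hσ := kms_denom_pos σ hρ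
  have hs := kms_denom_pos s hρ
  calc
    ((1 - |ρ|) / (2 * (1 + |ρ|))) ^ 2
      = (1 - ρ ^ 2) ^ 2 / (4 * (1 + |ρ|) ^ 2 * (1 + |ρ|) ^ 2) := by
        rw [← sq_abs ρ]
        field_simp
        ring
    _ ≤ (1 - ρ ^ 2) ^ 2 /
          (4 * (1 - 2 * ρ * Real.cos σ + ρ ^ 2) * (1 - 2 * ρ * Real.cos s + ρ ^ 2)) := by
        gcongr
        · exact kms_denom_le_sq_one_add_abs ρ σ
        · exact kms_denom_le_sq_one_add_abs ρ s
    _ = bSymb (kms ρ) σ s := (bSymb_kms σ s hρ).symm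

end KMS

theorem kms_b_formula_general {ρ : ℝ} (hρ : |ρ| ≠ 1) :
    (∀ σ s : ℝ, Real.cos σ ≠ Real.cos s →
      (kms ρ σ - kms ρ s) / (2 * (Real.cos s - Real.cos σ)) = (1 - ρ ^ 2) ^ 2 /
        (4 * (1 - 2 * ρ * Real.cos σ + ρ ^ 2) * (1 - 2 * ρ * Real.cos s + ρ ^ 2))) ∧
    ∃ c > (0 : ℝ), ∀ σ s : ℝ, c ≤ bSymb (kms ρ) σ s := by
  refine ⟨fun _ _ => kms_sub_kms_div hρ, ((1 - |ρ|) / (2 * (1 + |ρ|))) ^ 2, ?_,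
    fun σ s => le_bSymb_kms σ s hρ⟩
  exact sq_pos_of_ne_zero (div_ne_zero (sub_ne_zero.2 hρ.symm) (by positivity))

/-- Explicit formula for `b_{f_ρ}`; in particular `b_{f_ρ}` is positive and bounded away
from zero, uniformly in `σ` and `s`. -/
theorem kms_b_formula (ρ : ℝ) (hρ : ρ ∈ Set.Ioo (0:ℝ) 1) :
    (∀ σ s : ℝ, Real.cos σ ≠ Real.cos s →
      (kms ρ σ - kms ρ s) / (2*(Real.cos s - Real.cos σ))
        = (1-ρ^2)^2 /
            (4*(1 - 2*ρ*Real.cos σ + ρ^2)*(1 - 2*ρ*Real.cos s + ρ^2))) ∧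
    ∃ c > (0:ℝ), ∀ σ s : ℝ, c ≤ bSymb (kms ρ) σ s := by
  exact kms_b_formula_general (abs_lt.2 ⟨by linarith [hρ.1], hρ.2⟩).ne
end

section
/- Let f and g be symmetric simple-loop symbols of class SL^α with α ≥ 2, and for each n set h = 1/(n+1). Then there exists N ∈ ℕ such that for every n ≥ N the n eigenvalues of the Hermitian Toeplitz matrix T_n(f + h·g) are pairwise distinct, i.e. λ_1(T_n(f + h·g)) < λ_2(T_n(f + h·g)) < … < λ_n(T_n(f + h·g)). -/
/-!
Let `u` be symmetric about `π`, nondecreasing and nonconstant on `(0, π)`, let `T_n(u) z = l z`, and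
let `p` be the trigonometric polynomial with coefficients `z`. If the next row `(û_{n-j})_j` also
annihilates `z`, then rows `0, …, n` of the Toeplitz kernel of `w = u - l` all annihilate `z`, so
that both `p` and `e^{iθ} p` are orthogonal to `w p`: the Fourier coefficients `0` and `1` of
`w |p|²` vanish. Hence `∫ w |p|² (cos s - cos θ) = 0` for every `s`. Choosing `s` where `w` changes
sign makes the integrand nonnegative, so `p` vanishes wherever `u ≠ l`, in particular on an
interval, and `z = 0`. The next row is therefore a linear functional without zeros on the
eigenvectors, and every eigenspace is a line.
-/

open MeasureTheory Filter Real Topology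

open Set
open scoped ComplexConjugate Matrix

lemma intervalIntegrable_mul_exp {u : ℝ → ℝ} {a b : ℝ} (hu : IntervalIntegrable u volume a b)
    (k : ℤ) : IntervalIntegrable
      (fun θ => (u θ : ℂ) * Complex.exp (-Complex.I * (k : ℂ) * (θ : ℂ))) volume a b :=
  IntervalIntegrable.mul_continuousOn ⟨hu.1.ofReal, hu.2.ofReal⟩ (by fun_prop)

lemma fCoeff_sub {u v : ℝ → ℝ} (hu : IntervalIntegrable u volume 0 (2 * π))
    (hv : IntervalIntegrable v volume 0 (2 * π)) (k : ℤ) :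
    fCoeff (fun θ => u θ - v θ) k = fCoeff u k - fCoeff v k := by
  simp only [fCoeff, Complex.ofReal_sub, sub_mul]
  rw [intervalIntegral.integral_sub (intervalIntegrable_mul_exp hu k)
    (intervalIntegrable_mul_exp hv k), mul_sub]

lemma fCoeff_const (c : ℝ) (k : ℤ) : fCoeff (fun _ => c) k = if k = 0 then (c : ℂ) else 0 := by
  rw [fCoeff, intervalIntegral.integral_const_mul]
  split_ifs with hk
  · have hmean : ∫ θ in (0 : ℝ)..(2 * π), Complex.exp (-Complex.I * (k : ℂ) * (θ : ℂ)) = 2 * π := by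
      simp [hk]
    rw [hmean, mul_left_comm, one_div_mul_cancel (by simp [pi_ne_zero]), mul_one]
  · have hperiod : Complex.exp (-Complex.I * (k : ℂ) * ((2 * π : ℝ) : ℂ)) = 1 :=
      Complex.exp_eq_one_iff.2 ⟨-k, by push_cast; ring⟩
    rw [integral_exp_mul_complex (by simp [hk]), hperiod]
    simp

lemma re_fCoeff {u : ℝ → ℝ} (hu : IntervalIntegrable u volume 0 (2 * π)) (k : ℤ) :
    (fCoeff u k).re = 1 / (2 * π) * ∫ θ in (0 : ℝ)..(2 * π), u θ * cos (k * θ) := by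
  have hre (θ : ℝ) : u θ * cos (k * θ) =
      RCLike.re ((u θ : ℂ) * Complex.exp (-Complex.I * (k : ℂ) * (θ : ℂ))) := by
    have harg : -Complex.I * (k : ℂ) * (θ : ℂ) = ((-(k * θ) : ℝ) : ℂ) * Complex.I := by
      push_cast; ring
    rw [harg, RCLike.re_eq_complex_re, Complex.re_ofReal_mul, Complex.exp_ofReal_mul_I_re, cos_neg]
  have hscalar : (1 / (2 * (π : ℂ))) = ((1 / (2 * π) : ℝ) : ℂ) := by push_cast; rfl
  simp_rw [hre]
  rw [intervalIntegral.intervalIntegral_re (intervalIntegrable_mul_exp hu k), fCoeff, hscalar,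
    Complex.re_ofReal_mul, RCLike.re_eq_complex_re]

lemma integral_mul_cos_sub_cos_eq_zero {v : ℝ → ℝ} (hv : IntervalIntegrable v volume 0 (2 * π))
    (h0 : fCoeff v 0 = 0) (h1 : fCoeff v 1 = 0) (s : ℝ) :
    ∫ θ in (0 : ℝ)..(2 * π), v θ * (cos s - cos θ) = 0 := by
  have hmean : ∫ θ in (0 : ℝ)..(2 * π), v θ = 0 := by
    simpa [h0, pi_ne_zero] using re_fCoeff hv 0
  have hcos : ∫ θ in (0 : ℝ)..(2 * π), v θ * cos θ = 0 := by
    simpa [h1, pi_ne_zero] using re_fCoeff hv 1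
  simp_rw [mul_sub]
  rw [intervalIntegral.integral_sub (hv.mul_const _) (hv.mul_continuousOn (by fun_prop)),
    intervalIntegral.integral_mul_const, hmean, hcos, zero_mul, sub_zero]

lemma toeplitz_sub_const {u : ℝ → ℝ} (hu : IntervalIntegrable u volume 0 (2 * π)) (l : ℝ)
    (n : ℕ) : toeplitz (fun θ => u θ - l) n = toeplitz u n - (l : ℂ) • 1 := by
  ext i j
  simp [toeplitz, fCoeff_sub hu intervalIntegrable_const, fCoeff_const, Matrix.one_apply,
    sub_eq_zero, Fin.ext_iff]

/-- The trigonometric polynomial `∑_{j < n} z_j e^{ijθ}` whose coefficients, indexed from `0`, are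
the entries of `z`; it turns the Toeplitz form of `z` into an integral. -/
noncomputable def trigPoly {n : ℕ} (z : Fin n → ℂ) (θ : ℝ) : ℂ :=
  ∑ j, z j * Complex.exp (Complex.I * (j : ℂ) * (θ : ℂ))

lemma continuous_trigPoly {n : ℕ} (z : Fin n → ℂ) : Continuous (trigPoly z) := by
  unfold trigPoly
  fun_prop

lemma trigPoly_eq_eval_ofFn {n : ℕ} (z : Fin n → ℂ) (θ : ℝ) :
    trigPoly z θ = (Polynomial.ofFn n z).eval (Circle.exp θ : ℂ) := by
  simp only [trigPoly, Polynomial.ofFn_eq_sum_monomial, Polynomial.eval_finsetSum,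
    Polynomial.eval_monomial, Circle.coe_exp, ← Complex.exp_nat_mul]
  exact Finset.sum_congr rfl fun j _ => by ring_nf

lemma eq_zero_of_trigPoly_eq_zero {n : ℕ} {z : Fin n → ℂ} {S : Set ℝ} (hS : S ⊆ Ico 0 (2 * π))
    (hinf : S.Infinite) (h : ∀ θ ∈ S, trigPoly z θ = 0) : z = 0 := by
  have hinj : InjOn (fun θ => (Circle.exp θ : ℂ)) S :=
    Circle.coe_injective.comp_injOn ((Circle.exp_injOn_Ico (by simp)).mono hS)
  have hroots : (fun θ => (Circle.exp θ : ℂ)) '' S ⊆ {x | (Polynomial.ofFn n z).IsRoot x} := by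
    rintro _ ⟨θ, hθ, rfl⟩
    exact (trigPoly_eq_eval_ofFn z θ).symm.trans (h θ hθ)
  have hzero := Polynomial.eq_zero_of_infinite_isRoot _ ((hinf.image hinj).mono hroots)
  exact Polynomial.injective_ofFn n (hzero.trans (map_zero _).symm)

lemma normSq_trigPoly_mul_exp {n : ℕ} (z : Fin n → ℂ) (m : ℤ) (θ : ℝ) :
    (Complex.normSq (trigPoly z θ) : ℂ) * Complex.exp (-Complex.I * (m : ℂ) * (θ : ℂ)) =
      ∑ j, ∑ k, conj (z j) * z k *
        Complex.exp (-Complex.I * ((m + j - k : ℤ) : ℂ) * (θ : ℂ)) := by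
  rw [Complex.normSq_eq_conj_mul_self, trigPoly, map_sum, Finset.sum_mul_sum]
  simp only [Finset.sum_mul]
  refine Finset.sum_congr rfl fun j _ => Finset.sum_congr rfl fun k _ => ?_
  have hexp : Complex.exp (-Complex.I * ((m + j - k : ℤ) : ℂ) * (θ : ℂ)) =
      conj (Complex.exp (Complex.I * (j : ℂ) * (θ : ℂ))) *
        Complex.exp (Complex.I * (k : ℂ) * (θ : ℂ)) *
          Complex.exp (-Complex.I * (m : ℂ) * (θ : ℂ)) := by
    rw [← Complex.exp_conj, ← Complex.exp_add, ← Complex.exp_add]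
    congr 1
    simp only [map_mul, Complex.conj_I, Complex.conj_ofReal, Complex.conj_natCast]
    push_cast
    ring
  rw [hexp, map_mul]
  ring

lemma fCoeff_mul_normSq_trigPoly {w : ℝ → ℝ} (hw : IntervalIntegrable w volume 0 (2 * π)) {n : ℕ}
    (z : Fin n → ℂ) (m : ℤ) :
    fCoeff (fun θ => w θ * Complex.normSq (trigPoly z θ)) m =
      ∑ j : Fin n, conj (z j) * ∑ k : Fin n, fCoeff w (m + j - k) * z k := by
  have hexpand (θ : ℝ) : ((w θ * Complex.normSq (trigPoly z θ) : ℝ) : ℂ) *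
      Complex.exp (-Complex.I * (m : ℂ) * (θ : ℂ)) = ∑ j, ∑ k, conj (z j) * z k *
        ((w θ : ℂ) * Complex.exp (-Complex.I * ((m + j - k : ℤ) : ℂ) * (θ : ℂ))) := by
    rw [Complex.ofReal_mul, mul_assoc, normSq_trigPoly_mul_exp]
    simp only [Finset.mul_sum]
    exact Finset.sum_congr rfl fun j _ => Finset.sum_congr rfl fun k _ => by ring
  have hint (j k : Fin n) :=
    (intervalIntegrable_mul_exp hw (m + j - k)).const_mul (conj (z j) * z k)
  simp_rw [fCoeff, hexpand]
  rw [intervalIntegral.integral_finsetSum fun j _ => by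
    simpa only [Finset.sum_fn] using IntervalIntegrable.sum Finset.univ fun k _ => hint j k]
  simp_rw [intervalIntegral.integral_finsetSum fun k _ => hint _ k,
    intervalIntegral.integral_const_mul, Finset.mul_sum]
  exact Finset.sum_congr rfl fun j _ => Finset.sum_congr rfl fun k _ => by ring

lemma exists_threshold_of_monotoneOn_Ioo {α β : Type*} [ConditionallyCompleteLinearOrder α]
    [LinearOrder β] {f : α → β} {a b : α} (hab : a ≤ b) (hf : MonotoneOn f (Ioo a b)) (c : β) :
    ∃ s ∈ Icc a b, (∀ x ∈ Ioo a b, x < s → f x < c) ∧ ∀ x ∈ Ioo a b, s < x → c ≤ f x := by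
  set S := insert a {x ∈ Ioo a b | f x < c} with hS
  have hle : ∀ x ∈ S, x ≤ b := by
    rintro x (rfl | hx)
    exacts [hab, hx.1.2.le]
  have hbdd : BddAbove S := ⟨b, hle⟩
  have hne : S.Nonempty := ⟨a, mem_insert a _⟩
  refine ⟨sSup S, ⟨le_csSup hbdd (mem_insert a _), csSup_le hne hle⟩, fun x hx hxs => ?_,
    fun x hx hsx => ?_⟩
  · obtain ⟨y, rfl | hy, hxy⟩ := exists_lt_of_lt_csSup hne hxs
    · exact absurd hxy hx.1.not_gt
    · exact (hf hx hy.1 hxy.le).trans_lt hy.2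
  · by_contra! hlt
    exact hsx.not_ge (le_csSup hbdd (mem_insert_of_mem a ⟨hx, hlt⟩))

lemma exists_forall_sub_mul_cos_sub_cos_nonneg {u : ℝ → ℝ} (hmono : MonotoneOn u (Ioo 0 π))
    (l : ℝ) : ∃ s ∈ Icc 0 π, ∀ θ ∈ Ioo 0 π, 0 ≤ (u θ - l) * (cos s - cos θ) := by
  obtain ⟨s, hs, hbelow, habove⟩ := exists_threshold_of_monotoneOn_Ioo pi_pos.le hmono l
  refine ⟨s, hs, fun θ hθ => ?_⟩
  have hθ' := Ioo_subset_Icc_self hθ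
  rcases lt_trichotomy θ s with hlt | rfl | hgt
  · exact mul_nonneg_of_nonpos_of_nonpos (sub_nonpos.2 (hbelow θ hθ hlt).le)
      (sub_nonpos.2 (strictAntiOn_cos hθ' hs hlt).le)
  · simp
  · exact mul_nonneg (sub_nonneg.2 (habove θ hθ hgt))
      (sub_nonneg.2 (strictAntiOn_cos hs hθ' hgt).le)

lemma ae_restrict_Ioc_zero_two_pi_of_symm {P : ℝ → Prop} (hsymm : ∀ θ, P (2 * π - θ) → P θ)
    (h : ∀ θ ∈ Ioo 0 π, P θ) : ∀ᵐ θ ∂volume.restrict (Ioc 0 (2 * π)), P θ := by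
  rw [← Measure.restrict_congr_set Ioo_ae_eq_Ioc]
  filter_upwards [self_mem_ae_restrict measurableSet_Ioo, compl_mem_ae_iff.2 (measure_singleton π)]
    with θ hθ hne
  rcases lt_or_gt_of_ne hne with hlt | hgt
  · exact h θ ⟨hθ.1, hlt⟩
  · exact hsymm θ (h _ ⟨by linarith [hθ.2], by linarith⟩)

lemma exists_Ioo_forall_ne_of_monotoneOn {u : ℝ → ℝ} (hmono : MonotoneOn u (Ioo 0 π))
    (hne : ∃ a ∈ Ioo 0 π, ∃ b ∈ Ioo 0 π, u a < u b) (l : ℝ) :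
    ∃ c d, c < d ∧ Ioo c d ⊆ Ioo 0 π ∧ ∀ θ ∈ Ioo c d, u θ ≠ l := by
  obtain ⟨a, ha, b, hb, hab⟩ := hne
  rcases lt_or_ge l (u b) with hlt | hge
  · have hsub : Ioo b π ⊆ Ioo 0 π := Ioo_subset_Ioo_left hb.1.le
    exact ⟨b, π, hb.2, hsub, fun θ hθ => (hlt.trans_le (hmono hb (hsub hθ) hθ.1.le)).ne'⟩
  · have hsub : Ioo 0 a ⊆ Ioo 0 π := Ioo_subset_Ioo_right ha.2.le
    exact ⟨0, a, ha.1, hsub, fun θ hθ =>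
      ((hmono (hsub hθ) ha hθ.2.le).trans_lt (hab.trans_le hge)).ne⟩

lemma sum_fCoeff_mul_eq_zero_of_le {w : ℝ → ℝ} {n : ℕ} {z : Fin n → ℂ}
    (hz : toeplitz w n *ᵥ z = 0) (hlast : ∑ k : Fin n, fCoeff w (n - k) * z k = 0) {i : ℕ}
    (hi : i ≤ n) : ∑ k : Fin n, fCoeff w (i - k) * z k = 0 := by
  rcases hi.lt_or_eq with hlt | rfl
  · exact congrFun hz ⟨i, hlt⟩
  · exact hlast

lemma ae_mul_normSq_trigPoly_eq_zero {w : ℝ → ℝ} (hw : IntervalIntegrable w volume 0 (2 * π))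
    {s : ℝ} (hsign : ∀ᵐ θ ∂volume.restrict (Ioc 0 (2 * π)), 0 ≤ w θ * (cos s - cos θ)) {n : ℕ}
    {z : Fin n → ℂ} (hz : toeplitz w n *ᵥ z = 0)
    (hlast : ∑ k : Fin n, fCoeff w (n - k) * z k = 0) :
    ∀ᵐ θ ∂volume.restrict (Ioc 0 (2 * π)),
      w θ * Complex.normSq (trigPoly z θ) * (cos s - cos θ) = 0 := by
  have hcont : Continuous fun θ => Complex.normSq (trigPoly z θ) :=
    Complex.continuous_normSq.comp (continuous_trigPoly z)
  have hv : IntervalIntegrable (fun θ => w θ * Complex.normSq (trigPoly z θ)) volume 0 (2 * π) :=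
    hw.mul_continuousOn hcont.continuousOn
  have hcoeff (m : ℕ) (hm : m ≤ 1) :
      fCoeff (fun θ => w θ * Complex.normSq (trigPoly z θ)) m = 0 := by
    rw [fCoeff_mul_normSq_trigPoly hw]
    refine Finset.sum_eq_zero fun j _ => mul_eq_zero_of_right _ ?_
    exact_mod_cast sum_fCoeff_mul_eq_zero_of_le hz hlast (i := m + j) (by omega)
  have hint := integral_mul_cos_sub_cos_eq_zero hv (by simpa using hcoeff 0 zero_le_one)
    (by simpa using hcoeff 1 le_rfl) s
  refine (intervalIntegral.integral_eq_zero_iff_of_le_of_nonneg_ae two_pi_pos.le ?_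
    (hv.mul_continuousOn (by fun_prop))).1 hint
  filter_upwards [hsign] with θ hθ
  rw [mul_right_comm]
  exact mul_nonneg hθ (Complex.normSq_nonneg _)

lemma eq_zero_of_toeplitz_mulVec_eq_zero {w : ℝ → ℝ}
    (hw : IntervalIntegrable w volume 0 (2 * π)) {s : ℝ} (hs : s ∈ Icc 0 π)
    (hsign : ∀ᵐ θ ∂volume.restrict (Ioc 0 (2 * π)), 0 ≤ w θ * (cos s - cos θ))
    {c d : ℝ} (hcd : c < d) (hsub : Ioo c d ⊆ Ioo 0 π) (hne : ∀ θ ∈ Ioo c d, w θ ≠ 0) {n : ℕ}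
    {z : Fin n → ℂ} (hz : toeplitz w n *ᵥ z = 0)
    (hlast : ∑ k : Fin n, fCoeff w (n - k) * z k = 0) : z = 0 := by
  have hsub' : Ioo c d ⊆ Ioo 0 (2 * π) :=
    hsub.trans (Ioo_subset_Ioo_right (by linarith [pi_pos]))
  have hae : trigPoly z =ᵐ[volume.restrict (Ioo c d)] 0 := by
    filter_upwards [self_mem_ae_restrict measurableSet_Ioo,
      ae_restrict_of_ae_restrict_of_subset (hsub'.trans Ioo_subset_Ioc_self)
        (ae_mul_normSq_trigPoly_eq_zero hw hsign hz hlast),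
      compl_mem_ae_iff.2 (measure_singleton s)] with θ hθ hzero hθs
    have hcos : cos s - cos θ ≠ 0 := fun h =>
      hθs (injOn_cos hs (Ioo_subset_Icc_self (hsub hθ)) (sub_eq_zero.1 h)).symm
    simpa [hne θ hθ, hcos] using hzero
  have hEqOn : EqOn (trigPoly z) 0 (Ioo c d) := Measure.eqOn_open_of_ae_eq hae isOpen_Ioo
    (continuous_trigPoly z).continuousOn continuousOn_const
  exact eq_zero_of_trigPoly_eq_zero (hsub'.trans Ioo_subset_Ico_self) (Ioo_infinite hcd) hEqOn

lemma eq_zero_of_toeplitz_mulVec_eq_smul {u : ℝ → ℝ}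
    (hu : IntervalIntegrable u volume 0 (2 * π)) (hsymm : ∀ θ, u (2 * π - θ) = u θ)
    (hmono : MonotoneOn u (Ioo 0 π)) (hne : ∃ a ∈ Ioo 0 π, ∃ b ∈ Ioo 0 π, u a < u b) {n : ℕ}
    {z : Fin n → ℂ} {l : ℝ} (hz : toeplitz u n *ᵥ z = (l : ℂ) • z)
    (hlast : ∑ k : Fin n, fCoeff u (n - k) * z k = 0) : z = 0 := by
  obtain ⟨s, hs, hsign⟩ := exists_forall_sub_mul_cos_sub_cos_nonneg hmono l
  obtain ⟨c, d, hcd, hsub, hnel⟩ := exists_Ioo_forall_ne_of_monotoneOn hmono hne l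
  refine eq_zero_of_toeplitz_mulVec_eq_zero (w := fun θ => u θ - l)
    (hu.sub intervalIntegrable_const) hs (ae_restrict_Ioc_zero_two_pi_of_symm (fun θ h => ?_) hsign)
    hcd hsub (fun θ hθ => sub_ne_zero.2 (hnel θ hθ)) ?_ ?_
  · rwa [hsymm, cos_two_pi_sub] at h
  · rw [toeplitz_sub_const hu, Matrix.sub_mulVec, hz, Matrix.smul_mulVec, Matrix.one_mulVec,
      sub_self]
  · rw [← hlast]
    refine Finset.sum_congr rfl fun k _ => ?_
    rw [fCoeff_sub hu intervalIntegrable_const, fCoeff_const, if_neg (by omega), sub_zero]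

lemma eigenvalues_injective_of_dotProduct {𝕜 ι : Type*} [RCLike 𝕜] [Fintype ι] [DecidableEq ι]
    {A : Matrix ι ι 𝕜} (hA : A.IsHermitian) (c : ι → 𝕜)
    (hc : ∀ (l : ℝ) (z : ι → 𝕜), A *ᵥ z = (l : 𝕜) • z → c ⬝ᵥ z = 0 → z = 0) :
    Function.Injective hA.eigenvalues := by
  intro i j hij
  by_contra hne
  set x : ι → 𝕜 := ⇑(hA.eigenvectorBasis i)
  set y : ι → 𝕜 := ⇑(hA.eigenvectorBasis j)
  have hx : A *ᵥ x = (hA.eigenvalues i : 𝕜) • x := by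
    simpa only [RCLike.real_smul_eq_coe_smul (K := 𝕜)] using hA.mulVec_eigenvectorBasis i
  have hy : A *ᵥ y = (hA.eigenvalues i : 𝕜) • y := by
    simpa only [hij, RCLike.real_smul_eq_coe_smul (K := 𝕜)] using hA.mulVec_eigenvectorBasis j
  have hcomb : (c ⬝ᵥ y) • x + (-(c ⬝ᵥ x)) • y = 0 := by
    refine hc (hA.eigenvalues i) _ ?_ ?_
    · rw [Matrix.mulVec_add, Matrix.mulVec_smul, Matrix.mulVec_smul, hx, hy, smul_add,
        smul_comm (c ⬝ᵥ y), smul_comm (-(c ⬝ᵥ x))]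
    · rw [dotProduct_add, dotProduct_smul, dotProduct_smul, smul_eq_mul, smul_eq_mul]
      ring
  have hindep := hA.eigenvectorBasis.orthonormal.linearIndependent
  have hcy : c ⬝ᵥ y = 0 := ((LinearIndepOn.pair_iff _ hne).1 (hindep.linearIndepOn _) _ _
    (by ext k; exact congrFun hcomb k)).1
  have hy0 : hA.eigenvectorBasis j = 0 := by
    ext k
    exact congrFun (hc _ y hy hcy) k
  exact hindep.ne_zero j hy0

lemma strictMono_sortedEigs {n : ℕ} {A : Matrix (Fin n) (Fin n) ℂ} {hA : A.IsHermitian}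
    (hinj : Function.Injective hA.eigenvalues) : StrictMono (sortedEigs hA) :=
  (Tuple.monotone_sort _).strictMono_of_injective (hinj.comp (Equiv.injective _))

theorem eigenvalues_distinct_general {u : ℝ → ℝ} (hu : IntervalIntegrable u volume 0 (2 * π))
    (hsymm : ∀ θ, u (2 * π - θ) = u θ) (hmono : MonotoneOn u (Ioo 0 π))
    (hne : ∃ a ∈ Ioo 0 π, ∃ b ∈ Ioo 0 π, u a < u b) {n : ℕ}
    (hA : (toeplitz u n).IsHermitian) : StrictMono (sortedEigs hA) :=
  strictMono_sortedEigs <| eigenvalues_injective_of_dotProduct hA (fun k => fCoeff u (n - k))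
    fun _ _ hz hlast => eq_zero_of_toeplitz_mulVec_eq_smul hu hsymm hmono hne hz hlast

lemma IsSimpleLoop.strictMonoOn {α : ℝ} {u : ℝ → ℝ} (hu : IsSimpleLoop α u) :
    StrictMonoOn u (Ioo 0 π) :=
  strictMonoOn_of_deriv_pos (convex_Ioo 0 π) hu.smooth.continuous.continuousOn
    fun θ hθ => hu.deriv_pos θ (interior_subset hθ)

lemma IsSimpleLoop.strictMono_sortedEigs {α : ℝ} {u : ℝ → ℝ} (hu : IsSimpleLoop α u) {n : ℕ}
    (hA : (toeplitz u n).IsHermitian) : StrictMono (sortedEigs hA) := by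
  obtain ⟨a, ha⟩ := nonempty_Ioo.2 pi_pos
  obtain ⟨b, hb⟩ := nonempty_Ioo.2 ha.2
  have hb' : b ∈ Ioo 0 π := ⟨ha.1.trans hb.1, hb.2⟩
  exact eigenvalues_distinct_general (hu.smooth.continuous.intervalIntegrable _ _) hu.symm
    hu.strictMonoOn.monotoneOn ⟨a, ha, b, hb', hu.strictMonoOn ha hb' hb.1⟩ hA

open Real in
/-- For all sufficiently large `n`, the eigenvalues of `T_n(f + h·g)` are pairwise distinct. -/
theorem eigenvalues_distinct (α : ℝ) (hα : 2 ≤ α) (f g : ℝ → ℝ)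
    (hf : IsSimpleLoop α f) (hg : IsSimpleLoop α g)
    (hSL : ∀ n : ℕ, IsSimpleLoop α (fun θ => f θ + (1/(n+1:ℝ)) * g θ))
    (hH : ∀ n : ℕ, (toeplitz (fun θ => f θ + (1/(n+1:ℝ)) * g θ) n).IsHermitian) :
    ∃ N : ℕ, ∀ n ≥ N, ∀ i j : Fin n, i < j →
      sortedEigs (hH n) i < sortedEigs (hH n) j :=
  ⟨0, fun n _ _ _ hij => (hSL n).strictMono_sortedEigs (hH n) hij⟩
end
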